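/- If the smooth projective toric variety X_Σ is semipositive, then the GKZ I-function has the expansion I^GKZ = e^{(t_0+δ)/ħ}(I_0 + I_1 ħ^{−1} + o(ħ^{−2})) with constant term I_0 = 1; that is, for every effective class β ≠ 0 the factor ∏_{ρ∈Σ(1)} [∏_{m=−∞}^0(D_ρ+mħ)]/[∏_{m=−∞}^{∫_β D_ρ}(D_ρ+mħ)] contains no ħ^0 term, the highest power of ħ^{−1} that can fail to appear being controlled by N = −K_{X_Σ}·β + #{ρ : D_ρ·β ≤ −1} ≥ 0, with N = 0 only when β = 0. -/

import Mathlib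

open scoped BigOperators

/-!
The factor `D + mħ` has order at least `-1` in `u = ħ⁻¹`, and at least `0` when `m = 0`. For
`m ≠ 0` its leading coefficient `m` is not a zero divisor, so its order is exactly `-1` and
multiplying a series by it shifts the order by exactly `-1`. Comparing orders in the defining
equation of `Φ` therefore gives `ord Φ ≥ N = ∑ ρ, d ρ + #{ρ | d ρ < 0}`, which is nonnegative by
semipositivity. If `N = 0`, both summands vanish, so all `d ρ` are nonnegative with sum zero, and
`d = 0`.
-/

section HahnSeries

open nonZeroDivisors

variable {Γ R ι : Type*} [AddCommMonoid Γ] [LinearOrder Γ] [IsOrderedCancelAddMonoid Γ]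
  [CommSemiring R]

theorem orderTop_mul_of_leadingCoeff_mem_nonZeroDivisors {x : HahnSeries Γ R}
    (hx : x.leadingCoeff ∈ R⁰) (y : HahnSeries Γ R) :
    (x * y).orderTop = x.orderTop + y.orderTop := by
  rcases eq_or_ne y 0 with rfl | hy
  · simp
  · refine HahnSeries.orderTop_mul_of_ne_zero fun hxy ↦ HahnSeries.leadingCoeff_ne_zero.mpr hy ?_
    exact (mul_left_mem_nonZeroDivisors_eq_zero_iff hx).mp hxy

theorem orderTop_prod_mul_of_leadingCoeff_mem_nonZeroDivisors (s : Finset ι)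
    {x : ι → HahnSeries Γ R} (hx : ∀ i ∈ s, (x i).leadingCoeff ∈ R⁰) (y : HahnSeries Γ R) :
    ((∏ i ∈ s, x i) * y).orderTop = ∑ i ∈ s, (x i).orderTop + y.orderTop := by
  induction s using Finset.cons_induction with
  | empty => simp
  | cons i s his ih =>
    rw [Finset.forall_mem_cons] at hx
    rw [Finset.prod_cons, Finset.sum_cons, mul_assoc, add_assoc,
      orderTop_mul_of_leadingCoeff_mem_nonZeroDivisors hx.1, ih hx.2]

theorem sum_orderTop_le_orderTop_prod (s : Finset ι) (x : ι → HahnSeries Γ R) :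
    ∑ i ∈ s, (x i).orderTop ≤ (∏ i ∈ s, x i).orderTop := by
  induction s using Finset.cons_induction with
  | empty => simpa using HahnSeries.orderTop_single_le (a := (0 : Γ)) (r := (1 : R))
  | cons i s his ih =>
    rw [Finset.prod_cons, Finset.sum_cons]
    exact (add_le_add_right ih _).trans HahnSeries.orderTop_add_le_mul

theorem zero_le_orderTop_C (r : R) : 0 ≤ (HahnSeries.C r : HahnSeries Γ R).orderTop :=
  HahnSeries.orderTop_single_le

theorem orderTop_single_lt_orderTop_C {g : Γ} (hg : g < 0) {r : R} (hr : r ≠ 0) (s : R) :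
    (HahnSeries.single g r).orderTop < (HahnSeries.C s : HahnSeries Γ R).orderTop := by
  rw [HahnSeries.orderTop_single hr]
  exact (WithTop.coe_lt_coe.mpr hg).trans_le (zero_le_orderTop_C s)

end HahnSeries

theorem intCast_mem_nonZeroDivisors {R : Type*} [CommRing R] [IsAddTorsionFree R] {m : ℤ}
    (hm : m ≠ 0) : (m : R) ∈ nonZeroDivisors R := by
  refine mem_nonZeroDivisors_iff_right.mpr fun x hx ↦ ?_
  rwa [mul_comm, ← zsmul_eq_mul, IsAddTorsionFree.zsmul_eq_zero_iff_right hm] at hx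

section Factor

variable {H : Type*} [CommRing H]

/-- The factor `D + mħ` of the GKZ `I`-function, as a Laurent series in `u = ħ⁻¹`, so that `ħ` is
`single (-1) 1`. -/
noncomputable def gkzFactor (D : H) (m : ℤ) : LaurentSeries H :=
  HahnSeries.C D + m • (HahnSeries.single (-1 : ℤ) 1 : LaurentSeries H)

theorem gkzFactor_eq_C_add_single (D : H) (m : ℤ) :
    gkzFactor D m = HahnSeries.C D + HahnSeries.single (-1 : ℤ) (m : H) := by
  have hm : (m : LaurentSeries H) = HahnSeries.single 0 (m : H) := (map_intCast HahnSeries.C m).symm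
  rw [gkzFactor, zsmul_eq_mul, hm, HahnSeries.single_mul_single, zero_add, mul_one]

theorem le_orderTop_gkzFactor (D : H) (m : ℤ) :
    ((-1 + if m = 0 then 1 else 0 : ℤ) : WithTop ℤ) ≤ (gkzFactor D m).orderTop := by
  rw [gkzFactor_eq_C_add_single]
  split_ifs with hm
  · simpa [hm] using zero_le_orderTop_C (Γ := ℤ) D
  · have hC : ((-1 : ℤ) : WithTop ℤ) ≤ (HahnSeries.C D : LaurentSeries H).orderTop :=
      (by decide : ((-1 : ℤ) : WithTop ℤ) ≤ 0).trans (zero_le_orderTop_C D)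
    exact (le_min hC HahnSeries.orderTop_single_le).trans HahnSeries.min_orderTop_le_orderTop_add

variable [IsAddTorsionFree H] [Nontrivial H]

theorem orderTop_gkzFactor (D : H) {m : ℤ} (hm : m ≠ 0) :
    (gkzFactor D m).orderTop = ((-1 : ℤ) : WithTop ℤ) := by
  have hmH : (m : H) ≠ 0 := nonZeroDivisors.ne_zero (intCast_mem_nonZeroDivisors hm)
  rw [gkzFactor_eq_C_add_single, HahnSeries.orderTop_add_eq_right
    (orderTop_single_lt_orderTop_C neg_one_lt_zero hmH D), HahnSeries.orderTop_single hmH]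

theorem leadingCoeff_gkzFactor (D : H) {m : ℤ} (hm : m ≠ 0) :
    (gkzFactor D m).leadingCoeff = m := by
  have hmH : (m : H) ≠ 0 := nonZeroDivisors.ne_zero (intCast_mem_nonZeroDivisors hm)
  rw [gkzFactor_eq_C_add_single, HahnSeries.leadingCoeff_add_eq_right
    (orderTop_single_lt_orderTop_C neg_one_lt_zero hmH D), HahnSeries.leadingCoeff_of_single]

end Factor

section Order

variable {rays : Type*} [Fintype rays]

/-- The exponent `N = -K · β + #{ρ | D_ρ · β ≤ -1}` bounding the `u`-order of the `β`-summand of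
the GKZ `I`-function from below, as a function of the intersection numbers `d ρ = D_ρ · β`. -/
def gkzOrder (d : rays → ℤ) : ℤ :=
  ∑ ρ, d ρ + Finset.card {ρ | d ρ < 0}

theorem gkzOrder_nonneg {d : rays → ℤ} (hd : 0 ≤ ∑ ρ, d ρ) : 0 ≤ gkzOrder d :=
  add_nonneg hd (Nat.cast_nonneg _)

theorem gkzOrder_pos {d : rays → ℤ} (hd : 0 ≤ ∑ ρ, d ρ) (hne : d ≠ 0) : 0 < gkzOrder d := by
  refine (gkzOrder_nonneg hd).lt_of_ne' fun hN ↦ hne ?_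
  obtain ⟨hsum, hcard⟩ := (add_eq_zero_iff_of_nonneg hd (Nat.cast_nonneg _)).mp hN
  have hnonneg : 0 ≤ d := by
    simpa [Finset.filter_eq_empty_iff, Pi.le_def] using hcard
  exact (Fintype.sum_eq_zero_iff_of_nonneg hnonneg).mp hsum

theorem sum_Icc_sub_sum_Icc_eq_add_ite (d : ℤ) :
    (∑ m ∈ Finset.Icc (d + 1) 0, (-1 + if m = 0 then (1 : ℤ) else 0)) -
      ∑ _m ∈ Finset.Icc 1 d, (-1 : ℤ) = d + if d < 0 then 1 else 0 := by
  rw [Finset.sum_add_distrib, Finset.sum_ite_eq']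
  simp only [Finset.sum_const, Int.card_Icc, Finset.mem_Icc, nsmul_eq_mul]
  split_ifs <;> omega

theorem sum_sum_Icc_eq_add_gkzOrder (d : rays → ℤ) :
    ∑ ρ, ∑ m ∈ Finset.Icc (d ρ + 1) 0, (-1 + if m = 0 then (1 : ℤ) else 0) =
      ∑ ρ, ∑ _m ∈ Finset.Icc 1 (d ρ), (-1 : ℤ) + gkzOrder d := by
  rw [← sub_eq_iff_eq_add', ← Finset.sum_sub_distrib, gkzOrder, Finset.natCast_card_filter,
    ← Finset.sum_add_distrib]
  exact Finset.sum_congr rfl fun ρ _ ↦ sum_Icc_sub_sum_Icc_eq_add_ite (d ρ)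

end Order

section Summand

variable {H rays : Type*} [CommRing H] [Fintype rays] (D : rays → H) (d : rays → ℤ)

theorem le_orderTop_prod_gkzFactor :
    ((∑ ρ, ∑ m ∈ Finset.Icc (d ρ + 1) 0, (-1 + if m = 0 then 1 else 0) : ℤ) : WithTop ℤ) ≤
      (∏ ρ, ∏ m ∈ Finset.Icc (d ρ + 1) 0, gkzFactor (D ρ) m).orderTop := by
  push_cast [WithTop.coe_sum]
  refine le_trans ?_ (sum_orderTop_le_orderTop_prod _ _)
  gcongr with ρ
  refine le_trans ?_ (sum_orderTop_le_orderTop_prod _ _)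
  gcongr with m
  exact_mod_cast le_orderTop_gkzFactor (D ρ) m

variable [IsAddTorsionFree H]

theorem orderTop_prod_gkzFactor_mul [Nontrivial H] (Φ : LaurentSeries H) :
    ((∏ ρ, ∏ m ∈ Finset.Icc 1 (d ρ), gkzFactor (D ρ) m) * Φ).orderTop =
      ((∑ ρ, ∑ _m ∈ Finset.Icc 1 (d ρ), (-1) : ℤ) : WithTop ℤ) + Φ.orderTop := by
  have hne : ∀ i ∈ Finset.univ.sigma fun ρ ↦ Finset.Icc 1 (d ρ), i.2 ≠ 0 := fun i hi ↦
    (Int.one_pos.trans_le (Finset.mem_Icc.mp (Finset.mem_sigma.mp hi).2).1).ne'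
  rw [Finset.prod_sigma', Finset.sum_sigma', WithTop.coe_sum,
    orderTop_prod_mul_of_leadingCoeff_mem_nonZeroDivisors]
  · congr 1
    exact Finset.sum_congr rfl fun i hi ↦ orderTop_gkzFactor _ (hne i hi)
  · intro i hi
    rw [leadingCoeff_gkzFactor _ (hne i hi)]
    exact intCast_mem_nonZeroDivisors (hne i hi)

variable {D d}

theorem gkzOrder_le_orderTop {Φ : LaurentSeries H}
    (hΦ : (∏ ρ, ∏ m ∈ Finset.Icc 1 (d ρ), gkzFactor (D ρ) m) * Φ =
      ∏ ρ, ∏ m ∈ Finset.Icc (d ρ + 1) 0, gkzFactor (D ρ) m) :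
    (gkzOrder d : WithTop ℤ) ≤ Φ.orderTop := by
  rcases subsingleton_or_nontrivial H with _ | _
  · simp
  · have hle := le_orderTop_prod_gkzFactor D d
    rw [← hΦ, orderTop_prod_gkzFactor_mul, sum_sum_Icc_eq_add_gkzOrder, WithTop.coe_add] at hle
    exact (WithTop.add_le_add_iff_left WithTop.coe_ne_top).mp hle

theorem gkz_I_function_constant_term_eq_one_general (hd : 0 ≤ ∑ ρ, d ρ) {Φ : LaurentSeries H}
    (hΦ : (∏ ρ, ∏ m ∈ Finset.Icc 1 (d ρ), gkzFactor (D ρ) m) * Φ =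
      ∏ ρ, ∏ m ∈ Finset.Icc (d ρ + 1) 0, gkzFactor (D ρ) m) :
    (∀ j : ℤ, j < 0 → Φ.coeff j = 0) ∧
      (d ≠ 0 → Φ.coeff 0 = 0) ∧ (d = 0 → Φ.coeff 0 = 1) := by
  have coeff_eq_zero {j : ℤ} (hj : j < gkzOrder d) : Φ.coeff j = 0 :=
    HahnSeries.coeff_eq_zero_of_lt_orderTop
      ((WithTop.coe_lt_coe.mpr hj).trans_le (gkzOrder_le_orderTop hΦ))
  refine ⟨fun j hj ↦ coeff_eq_zero (hj.trans_le (gkzOrder_nonneg hd)),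
    fun hne ↦ coeff_eq_zero (gkzOrder_pos hd hne), ?_⟩
  rintro rfl
  have hΦ_one : Φ = 1 := by simpa using hΦ
  simp [hΦ_one]

end Summand

/-- **The constant term of the GKZ `I`-function of a semipositive toric variety is
`1`.**  Let `X_Σ` be a smooth projective toric variety, with torus-invariant divisor
classes `D_ρ ∈ H^*(X_Σ)` and intersection numbers `∫_β D_ρ = degZ β ρ` for curve
classes `β` in the Mori lattice `NE_ℤ(X_Σ)`.  Write
`Φ_β = ∏_{ρ∈Σ(1)} [∏_{m=−∞}^0 (D_ρ + mħ)] / [∏_{m=−∞}^{∫_β D_ρ} (D_ρ + mħ)]`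
for the summand of the GKZ `I`-function
`I^{GKZ} = e^{(t_0+δ)/ħ} Σ_{β ∈ NE_ℤ} q^β Φ_β`, an `H^*(X_Σ)`-valued Laurent series in
`ħ^{-1}` (below, `LaurentSeries H` is taken in the variable `u = ħ^{-1}`, so that
`ħ = u^{-1}` is `single (-1) 1`, and `Φ` is characterized as the solution of
`[∏_{ρ : ∫_β D_ρ > 0} ∏_{m=1}^{∫_β D_ρ} (D_ρ + mħ)] · Φ
   = ∏_{ρ : ∫_β D_ρ < 0} ∏_{m=∫_β D_ρ + 1}^{0} (D_ρ + mħ)`).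
If `X_Σ` is semipositive (`−K_{X_Σ}·β = Σ_ρ ∫_β D_ρ ≥ 0` for all effective `β`), then
`I^{GKZ} = e^{(t_0+δ)/ħ} (I_0 + I_1 ħ^{-1} + o(ħ^{-2}))` with `I_0 = 1`: each `Φ_β` has
no positive powers of `ħ` (the possible failure being controlled by
`N = −K_{X_Σ}·β + #{ρ : D_ρ·β ≤ −1} ≥ 0`), its `ħ^0`-term vanishes for `β ≠ 0`
(`N = 0` happens only for `β = 0`), and equals `1` for `β = 0`. -/
theorem gkz_I_function_constant_term_eq_one
    (H : Type) [CommRing H] [Algebra ℂ H]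
    (Λ : Type) [AddCommGroup Λ] (NE : AddSubmonoid Λ)
    (rays : Type) [Fintype rays]
    (Drho : rays → H) (degZ : Λ →+ (rays → ℤ))
    -- semipositivity: `−K_{X_Σ} · β ≥ 0` for every effective class
    (hsemipos : ∀ β ∈ NE, 0 ≤ ∑ ρ, degZ β ρ)
    -- the pairing between `H₂` and `H²` is perfect and the `D_ρ` generate `H²`
    (hnondeg : ∀ β : Λ, (∀ ρ, degZ β ρ = 0) → β = 0)
    (β : Λ) (hβ : β ∈ NE) (Φ : LaurentSeries H)
    (hΦ : (∏ ρ, ∏ m ∈ Finset.Icc 1 (degZ β ρ),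
            (HahnSeries.C (Drho ρ) +
              m • (HahnSeries.single (-1 : ℤ) 1 : LaurentSeries H))) * Φ =
          ∏ ρ, ∏ m ∈ Finset.Icc (degZ β ρ + 1) 0,
            (HahnSeries.C (Drho ρ) +
              m • (HahnSeries.single (-1 : ℤ) 1 : LaurentSeries H))) :
    (∀ j : ℤ, j < 0 → Φ.coeff j = 0) ∧
      (β ≠ 0 → Φ.coeff 0 = 0) ∧ (β = 0 → Φ.coeff 0 = 1) := by
  have := IsAddTorsionFree.of_isTorsionFree ℂ H
  have hdeg : degZ β = 0 ↔ β = 0 := ⟨fun h ↦ hnondeg β (congrFun h), fun h ↦ h ▸ map_zero degZ⟩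
  simpa only [ne_eq, hdeg] using gkz_I_function_constant_term_eq_one_general (hsemipos β hβ) hΦ
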